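/- The distributed shortcutting algorithm B, applied to a walk P from v_1 to v_r in which vis is initialized to true at v_r and false elsewhere, terminates with a path P' in which every vertex of P appears exactly once; i.e., all occurrences of each non-terminal vertex after its first occurrence, and all occurrences of the terminal vertex except its last, are shortcutted. -/

import Mathlib

/-- Sequential abstraction of the distributed shortcutting algorithm `B`: scan
the sequence left to right, deleting (shortcutting) every occurrence of a
vertex that has already been seen, reconnecting the neighbours. -/
def shortcutDedup {V : Type*} [DecidableEq V] (seen : Finset V) : List V → List V
  | [] => []
  | a :: l => if a ∈ seen then shortcutDedup seen l
              else a :: shortcutDedup (insert a seen) l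

theorem shortcutDedup_mem {V : Type*} [DecidableEq V] (l : List V) :
    ∀ (seen : Finset V) (x : V), x ∈ shortcutDedup seen l ↔ x ∈ l ∧ x ∉ seen := by
  induction l with
  | nil => intro seen x; simp [shortcutDedup]
  | cons a l ih =>
    intro seen x
    by_cases ha : a ∈ seen
    · simp only [shortcutDedup, if_pos ha, ih, List.mem_cons]
      grind
    · simp only [shortcutDedup, if_neg ha, ih, List.mem_cons, Finset.mem_insert]
      grind

theorem shortcutDedup_nodup {V : Type*} [DecidableEq V] (l : List V) :
    ∀ (seen : Finset V), (shortcutDedup seen l).Nodup := by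
  induction l with
  | nil => intro seen; simp [shortcutDedup]
  | cons a l ih =>
    intro seen
    by_cases ha : a ∈ seen
    · simp only [shortcutDedup, if_pos ha, ih]
    · simp [shortcutDedup, if_neg ha, ih, shortcutDedup_mem]

/-- The distributed shortcutting algorithm `B`, applied to a walk `P` from `v₁`
to `v_r` where `vis` is initialised to true at `v_r` and false elsewhere (so all
occurrences of a non-terminal vertex after its first, and all occurrences of the
terminal vertex except its last, are shortcut), terminates with a path `P'` in
which every vertex of `P` appears exactly once, still from `v₁` to `v_r`. -/
theorem shortcut_algorithm_correct {V : Type*} [DecidableEq V]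
    (P : List V) (v1 vr : V) (hne : P ≠ [])
    (hh : P.head? = some v1) (hl : P.getLast? = some vr) (h1r : v1 ≠ vr) :
    let P' := shortcutDedup {vr} P.dropLast ++ [vr]
    P'.Nodup ∧ P'.toFinset = P.toFinset ∧
      P'.head? = some v1 ∧ P'.getLast? = some vr := by
  intro P'
  obtain ⟨Q, rfl⟩ : ∃ Q, P = Q ++ [vr] := by
    rw [List.getLast?_eq_some_iff] at hl
    exact hl
  have hP : P' = shortcutDedup {vr} Q ++ [vr] := by simp [P']
  rw [hP]
  refine ⟨?_, ?_, ?_, by simp⟩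
  · rw [List.nodup_append]
    refine ⟨shortcutDedup_nodup _ _, by simp, ?_⟩
    intro a ha b hb
    rw [shortcutDedup_mem] at ha
    simp at ha hb
    grind
  · ext x
    simp [shortcutDedup_mem]
    grind
  · cases Q with
    | nil => simp at hh; exact absurd hh.symm h1r
    | cons a l =>
      simp at hh
      subst hh
      simp [shortcutDedup, h1r]
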